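/- arXiv:1309.2123 — 2 statements merged into one kernel-verified Lean document; each statement's English description precedes it below -/
import Mathlib

section
/- For every integer n ≥ 0 and every real x, the rescaled Atkin polynomials satisfy 𝓐_{n+1}(x) = x·V_n^{(1/2,−2/3)}(x;7/12) − (5/12)·𝒱_n^{(1/2,−2/3)}(x;7/12). -/
noncomputable section

/-- The rescaled Atkin polynomials `𝓐_n`. -/
def Atkin : ℕ → ℝ → ℝ
  | 0, _ => 1
  | 1, x => x - 5/12
  | 2, x => x^2 - (205/216) * x + 935/10368
  | n + 3, x =>
      (x - 2 * (((n : ℝ) + 2)^2 - 29/144) / (4 * ((n : ℝ) + 2)^2 - 1)) * Atkin (n + 2) x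
      - ((((n : ℝ) + 2) - 13/12) * (((n : ℝ) + 2) - 7/12) * (((n : ℝ) + 2) - 5/12)
          * (((n : ℝ) + 2) + 1/12)
         / (2 * ((n : ℝ) + 2) * (2 * ((n : ℝ) + 2) - 1)^2 * (2 * ((n : ℝ) + 2) - 2)))
        * Atkin (n + 1) x

/-- `λ₀` for the associated Jacobi recurrence. -/
def lam0 (α β c : ℝ) : ℝ := (c + β + 1) * (c + α + β + 1) / ((2*c + α + β + 1) * (2*c + α + β + 2))

/-- `μ₀` for the associated Jacobi recurrence. -/
def mu0 (α β c : ℝ) : ℝ := c * (c + α) / ((2*c + α + β) * (2*c + α + β + 1))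

/-- Solutions of the associated Jacobi second order recurrence with `T 0 = 1` and
prescribed `T 1`. -/
def AJ (α β c : ℝ) (T1 : ℝ → ℝ) : ℕ → ℝ → ℝ
  | 0, _ => 1
  | 1, x => T1 x
  | n + 2, x =>
      (x + (α^2 - β^2 - (2*((n:ℝ)+1) + 2*c + α + β) * (2*((n:ℝ)+1) + 2*c + α + β + 2))
            / (2 * (2*((n:ℝ)+1) + 2*c + α + β) * (2*((n:ℝ)+1) + 2*c + α + β + 2)))
        * AJ α β c T1 (n + 1) x
      - ((((n:ℝ)+1) + c) * (((n:ℝ)+1) + c + α) * (((n:ℝ)+1) + c + β) * (((n:ℝ)+1) + c + α + β)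
          / ((2*((n:ℝ)+1) + 2*c + α + β - 1) * (2*((n:ℝ)+1) + 2*c + α + β)^2
              * (2*((n:ℝ)+1) + 2*c + α + β + 1)))
        * AJ α β c T1 n x

/-- The monic associated Jacobi polynomials `V_n^{(α,β)}(x;c)`. -/
def V (α β c : ℝ) : ℕ → ℝ → ℝ :=
  AJ α β c (fun x => x - (lam0 α β c + mu0 α β c))

/-- The monic associated Jacobi polynomials `𝒱_n^{(α,β)}(x;c)`. -/
def calV (α β c : ℝ) : ℕ → ℝ → ℝ :=
  AJ α β c (fun x => x - lam0 α β c)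

/-!
Both sides satisfy, in `n`, the same linear three-term recurrence. The coefficients of the
associated Jacobi recurrence depend on `n` and `c` only through `n + c`, and for
`(α, β) = (1/2, -2/3)` they become those of the Atkin recurrence with index `s` when
`n + c = s - 5/12`. Taking `c = 7/12` makes this `s = n + 1`, so the shifted sequence `𝓐_{n+1}` is
an associated Jacobi solution, and it remains to compare the first two terms.
-/

/-- The solutions `u : ℕ → M` of the three-term recurrence
`u (n + 2) = a n • u (n + 1) - b n • u n`, in the sign convention of monic orthogonal polynomials;
`a n` and `b n` are the coefficients of the step that produces `u (n + 2)`. -/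
def threeTermSolutions {R : Type*} (M : Type*) [CommRing R] [AddCommGroup M] [Module R M]
    (a b : ℕ → R) : Submodule R (ℕ → M) where
  carrier := {u | ∀ n, u (n + 2) = a n • u (n + 1) - b n • u n}
  zero_mem' n := by simp
  add_mem' {u v} hu hv n := by
    simp only [Pi.add_apply, hu n, hv n]
    module
  smul_mem' r u hu n := by
    simp only [Pi.smul_apply, hu n]
    module

theorem threeTermSolutions_ext {R M : Type*} [CommRing R] [AddCommGroup M] [Module R M]
    {a b : ℕ → R} {u v : ℕ → M} (hu : u ∈ threeTermSolutions M a b)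
    (hv : v ∈ threeTermSolutions M a b) (h0 : u 0 = v 0) (h1 : u 1 = v 1) : u = v := by
  funext n
  induction n using Nat.twoStepInduction with
  | zero => exact h0
  | one => exact h1
  | more n ihn ihn1 => rw [hu n, hv n, ihn, ihn1]

/-- The diagonal coefficient of the monic Jacobi recurrence
`T (n + 1) = (x + jacobiDiag α β n) * T n - jacobiOffDiag α β n * T (n - 1)` on `[0, 1]`, extended
to a real index `t`; the associated polynomials arise by taking `t = n + c`. -/
def jacobiDiag (α β t : ℝ) : ℝ :=
  (α ^ 2 - β ^ 2 - (2 * t + α + β) * (2 * t + α + β + 2)) /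
    (2 * (2 * t + α + β) * (2 * t + α + β + 2))

/-- The off-diagonal coefficient of the monic Jacobi recurrence on `[0, 1]` at a real index `t`, to
be used with `jacobiDiag`. -/
def jacobiOffDiag (α β t : ℝ) : ℝ :=
  t * (t + α) * (t + β) * (t + α + β) /
    ((2 * t + α + β - 1) * (2 * t + α + β) ^ 2 * (2 * t + α + β + 1))

/-- The solutions, at a fixed point `x`, of the recurrence satisfied by the associated Jacobi
polynomials. The index is `n + 1 + c` because `u (n + 2)` comes from the `(n + 1)`-st step. -/
def associatedJacobiSolutions (α β c x : ℝ) : Submodule ℝ (ℕ → ℝ) :=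
  threeTermSolutions ℝ (fun n ↦ x + jacobiDiag α β (n + 1 + c))
    (fun n ↦ jacobiOffDiag α β (n + 1 + c))

theorem aj_mem_associatedJacobiSolutions (α β c x : ℝ) (T1 : ℝ → ℝ) :
    (AJ α β c T1 · x) ∈ associatedJacobiSolutions α β c x := by
  intro n
  simp only [AJ, jacobiDiag, jacobiOffDiag, smul_eq_mul, mul_add 2 ((n : ℝ) + 1) c]

theorem mul_V_sub_mul_calV_mem_associatedJacobiSolutions (α β c x p q : ℝ) :
    (fun n ↦ p * V α β c n x - q * calV α β c n x) ∈ associatedJacobiSolutions α β c x :=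
  sub_mem (Submodule.smul_mem _ p (aj_mem_associatedJacobiSolutions α β c x _))
    (Submodule.smul_mem _ q (aj_mem_associatedJacobiSolutions α β c x _))

theorem jacobiDiag_half_neg_two_thirds (s : ℝ) :
    jacobiDiag (1 / 2) (-2 / 3) (s - 5 / 12) = -(2 * (s ^ 2 - 29 / 144) / (4 * s ^ 2 - 1)) := by
  have index_shift : 2 * (s - 5 / 12) + 1 / 2 + -2 / 3 = 2 * s - 1 := by ring
  calc jacobiDiag (1 / 2) (-2 / 3) (s - 5 / 12)
      = 2 * -(2 * (s ^ 2 - 29 / 144)) / (2 * (4 * s ^ 2 - 1)) := by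
        rw [jacobiDiag, index_shift]
        congr 1 <;> ring
    _ = -(2 * (s ^ 2 - 29 / 144) / (4 * s ^ 2 - 1)) := by
        rw [mul_div_mul_left _ _ two_ne_zero, neg_div]

theorem jacobiOffDiag_half_neg_two_thirds (s : ℝ) :
    jacobiOffDiag (1 / 2) (-2 / 3) (s - 5 / 12) =
      (s - 13 / 12) * (s - 7 / 12) * (s - 5 / 12) * (s + 1 / 12) /
        (2 * s * (2 * s - 1) ^ 2 * (2 * s - 2)) := by
  rw [jacobiOffDiag]
  congr 1 <;> ring

theorem atkin_succ_mem_associatedJacobiSolutions (x : ℝ) :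
    (fun n ↦ Atkin (n + 1) x) ∈ associatedJacobiSolutions (1 / 2) (-2 / 3) (7 / 12) x := by
  intro n
  have index_shift : (n : ℝ) + 1 + 7 / 12 = (n + 2) - 5 / 12 := by ring
  simp only [index_shift, jacobiDiag_half_neg_two_thirds, jacobiOffDiag_half_neg_two_thirds,
    ← sub_eq_add_neg, smul_eq_mul, Atkin]

theorem atkin_eq_xV_sub_calV (n : ℕ) (x : ℝ) :
    Atkin (n + 1) x =
      x * V ((1:ℝ)/2) (-(2:ℝ)/3) ((7:ℝ)/12) n x
        - (5/12) * calV ((1:ℝ)/2) (-(2:ℝ)/3) ((7:ℝ)/12) n x := by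
  have solutions_agree := threeTermSolutions_ext
    (atkin_succ_mem_associatedJacobiSolutions x)
    (mul_V_sub_mul_calV_mem_associatedJacobiSolutions (1 / 2) (-2 / 3) (7 / 12) x x (5 / 12))
    (by simp [Atkin, V, calV, AJ])
    (by simp only [Atkin, V, calV, AJ, lam0, mu0]; ring)
  exact congrFun solutions_agree n
end
end

section
/- Let a, b, d be real numbers such that d and a+b+1 are not nonpositive integers, let x ∈ (0,1) be real, and let t be real with 0 < |t| < 1. Set z₁ = 1 − √((1+t)² − 4xt) and z₂ = 1 + √((1+t)² − 4xt), where √ denotes the principal branch of the complex square root. Then Σ_{n=0}^{∞} ((d+a)_n (b)_n)/((a+b+1)_n) · F(−n−a, n+b; d; x) · (−t)^n/n! = ((z₂−t)/(z₂+t))^{a+d} · (2/(z₂−t))^{b} · F(−a, b; d; (t+z₁)/(2t)) · F(a+d, a+1; a+b+1; 2t/(t+z₂)), where complex powers are taken with the principal branch and F denotes the Gauss hypergeometric function (analytically continued where the argument lies outside the unit disc but off [1,∞)). -/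
noncomputable section

/-- Rising factorial (Pochhammer symbol) `(a)_n = a(a+1)⋯(a+n-1)`. -/
def poch (a : ℝ) (n : ℕ) : ℝ := ∏ i ∈ Finset.range n, (a + (i : ℝ))

/-- The Gauss hypergeometric series `F(a,b;c;x) = Σ_{k≥0} (a)_k (b)_k / ((c)_k k!) xᵏ`. -/
def hyp (a b c x : ℝ) : ℝ :=
  ∑' k : ℕ, poch a k * poch b k / (poch c k * (Nat.factorial k : ℝ)) * x ^ k

/-- The Gauss hypergeometric function for real arguments `z < 1`, extended by
(principal branch) analytic continuation to arguments `z ≤ -1` via the Pfaff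
transformation `F(a,b;c;z) = (1-z)^{-a} F(a, c-b; c; z/(z-1))`, whose right-hand
side converges for all `z < 0`. -/
def hypExt (a b c z : ℝ) : ℝ :=
  if z < 0 then (1 - z) ^ (-a) * hyp a (c - b) c (z / (z - 1)) else hyp a b c z

/-!
Write `u = -t` and parametrize `x = (Z - Y * Z) / (1 - Y * Z)` and `u = Y / (1 - Y * Z)`. For small
`Y`, the binomial series and the Chu–Vandermonde identity turn each `F(-n-a,n+b;d;x)` into an Appell
double series in `Z` and `Y * Z`, so the generating series becomes a triple series. The coefficient
of `Y ^ N * Z ^ K` in it is a terminating Saalschütz sum, whose evaluation splits the series into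
`(1 - Y * Z) ^ b * F(a+d,b;a+b+1;Y) * F(-a,b;d;Z)`.

A contiguous relation makes `F(-n-a,n+b;d;x)` satisfy a three-term recurrence in `n` with limiting
form `p (n + 2) = (2 - 4 * x) * p (n + 1) - p n`. As `|2 - 4 * x| < 2`, the latter conserves a
positive definite quadratic form, so `F(-n-a,n+b;d;x)` grows subexponentially and the generating
series is analytic in `u ∈ (-1, 1)`. The closed form is analytic there as well, hence the two agree
on `(-1, 1)`; the Pfaff transformation of the factor in `Y` gives the stated formula.
-/

open Filter Topology Asymptotics Finset
open scoped Nat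

lemma poch_zero (a : ℝ) : poch a 0 = 1 := by simp [poch]

lemma poch_succ (a : ℝ) (n : ℕ) : poch a (n + 1) = poch a n * (a + n) := by
  simp [poch, prod_range_succ]

lemma poch_add (a : ℝ) (n k : ℕ) : poch a (n + k) = poch a n * poch (a + n) k := by
  simp only [poch, prod_range_add, Nat.cast_add, add_assoc]

lemma poch_succ_left (a : ℝ) (n : ℕ) : poch a (n + 1) = a * poch (a + 1) n := by
  simpa [poch_succ, poch_zero, add_comm 1 n] using poch_add a 1 n

lemma poch_add_one_eq {c : ℝ} (hc : c ≠ 0) (n : ℕ) : poch (c + 1) n = poch c n * (c + n) / c := by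
  rw [← poch_succ, poch_succ_left, mul_div_cancel_left₀ _ hc]

lemma poch_one (n : ℕ) : poch 1 n = n ! := by
  induction n with
  | zero => simp [poch_zero]
  | succ n ih => rw [poch_succ, ih, Nat.factorial_succ]; push_cast; ring

lemma poch_ne_zero {c : ℝ} (hc : ∀ m : ℕ, c ≠ -(m : ℝ)) (n : ℕ) : poch c n ≠ 0 :=
  prod_ne_zero_iff.2 fun i _ h ↦ hc i (eq_neg_of_add_eq_zero_left h)

lemma add_natCast_ne_neg {c : ℝ} (hc : ∀ m : ℕ, c ≠ -(m : ℝ)) (n m : ℕ) : c + n ≠ -(m : ℝ) :=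
  fun h ↦ hc (n + m) (by push_cast; linarith)

lemma poch_nonneg {a : ℝ} (ha : 0 ≤ a) (n : ℕ) : 0 ≤ poch a n :=
  prod_nonneg fun i _ ↦ by positivity

lemma abs_poch_le {a M : ℝ} (h : |a| ≤ M) (n : ℕ) : |poch a n| ≤ poch M n := by
  rw [poch, abs_prod]
  refine prod_le_prod (fun i _ ↦ abs_nonneg _) fun i _ ↦ (abs_add_le a i).trans ?_
  rw [Nat.abs_cast]
  gcongr

lemma ascPochhammer_eval_eq_poch (a : ℝ) (n : ℕ) : (ascPochhammer ℝ n).eval a = poch a n := by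
  induction n with
  | zero => simp [poch_zero]
  | succ n ih => rw [ascPochhammer_succ_eval, ih, poch_succ]

lemma choose_add_sub_one_eq_poch_div (a : ℝ) (n : ℕ) :
    Ring.choose (a + n - 1) n = poch a n / n ! := by
  rw [← Ring.multichoose_eq, eq_div_iff (by positivity), mul_comm, ← nsmul_eq_mul,
    Ring.factorial_nsmul_multichoose_eq_ascPochhammer, Polynomial.ascPochhammer_smeval_eq_eval,
    ascPochhammer_eval_eq_poch]

lemma choose_neg_eq_poch_div (a : ℝ) (n : ℕ) :
    Ring.choose (-a) n = (-1) ^ n * poch a n / n ! := by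
  rw [Ring.choose_neg, choose_add_sub_one_eq_poch_div, Int.negOnePow_def, Units.smul_def,
    zsmul_eq_mul, mul_div_assoc]
  norm_num

lemma sum_antidiagonal_poch_div_factorial {c : ℝ} (hc : ∀ m : ℕ, c ≠ -(m : ℝ)) (a : ℝ) (n : ℕ) :
    ∑ p ∈ antidiagonal n, (-1) ^ p.1 * poch a p.1 / (poch c p.1 * (p.1 ! * p.2 !)) =
      poch (c - a) n / (poch c n * n !) := by
  have vandermonde := Ring.add_choose_eq n (Commute.all (-a) (c + n - 1))
  rw [show -a + (c + n - 1) = c - a + n - 1 by ring, choose_add_sub_one_eq_poch_div] at vandermonde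
  rw [mul_comm (poch c n), ← div_div, vandermonde, sum_div]
  refine sum_congr rfl fun ⟨i, j⟩ hp ↦ ?_
  obtain rfl : i + j = n := by simpa using hp
  have h : c + ↑(i + j) - 1 = c + i + j - 1 := by push_cast; ring
  have := poch_ne_zero hc i
  have := poch_ne_zero (add_natCast_ne_neg hc i) j
  simp only [h, choose_neg_eq_poch_div, choose_add_sub_one_eq_poch_div, poch_add]
  field_simp

/-- The summand of the terminating series in Saalschütz's theorem, written with binomial
coefficients so that it vanishes by itself for `s > min N K`, where the subtractions truncate. -/
def saalschutzTerm (a b : ℝ) (N K s : ℕ) : ℝ :=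
  N.choose s * K.choose s * s ! * poch b (N + K - s) * poch (s - N - a) (K - s) /
    poch (a + b + 1) (N - s)

lemma saalschutzTerm_eq_zero {N s : ℕ} (h : N < s) (a b : ℝ) (K : ℕ) :
    saalschutzTerm a b N K s = 0 := by
  simp [saalschutzTerm, Nat.choose_eq_zero_of_lt h]

lemma saalschutzTerm_zero_succ {a b : ℝ} (hc : ∀ m : ℕ, a + b + 1 ≠ -(m : ℝ)) (N K : ℕ) :
    saalschutzTerm a b N (K + 1) 0 =
      b / (a + b + 1) * ((a + b + 1 + N) * (K - N - a)) * saalschutzTerm a (b + 1) N K 0 := by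
  have hc0 : a + b + 1 ≠ 0 := by simpa using hc 0
  have hcN : a + b + 1 + N ≠ 0 := by simpa using add_natCast_ne_neg hc N 0
  have := poch_ne_zero hc N
  simp only [saalschutzTerm, Nat.choose_zero_right, Nat.sub_zero, ← add_assoc, poch_succ_left b,
    poch_succ _ K, poch_add_one_eq hc0]
  push_cast
  field_simp
  ring

lemma choose_succ_mul_poch (c : ℝ) (s j : ℕ) :
    (s + j).choose (s + 1) * poch c j =
      (s + j).choose (s + 1) * (poch c (j - 1) * (c + j - 1)) := by
  cases j with
  | zero => simp
  | succ j => rw [Nat.add_sub_cancel, poch_succ]; push_cast; ring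

lemma saalschutzTerm_succ {a b : ℝ} (hc : ∀ m : ℕ, a + b + 1 ≠ -(m : ℝ)) {s K : ℕ}
    (hsK : s ≤ K) (M : ℕ) :
    saalschutzTerm a b (M + 1) (K + 1) (s + 1) =
      b / (a + b + 1) * ((a + b + 1 + (M + 1)) * (K - (M + 1) - a)) *
          saalschutzTerm a (b + 1) (M + 1) K (s + 1) +
        b / (a + b + 1) * ((a + b + 1 + M - K) * (M + 1)) * saalschutzTerm a (b + 1) M K s := by
  obtain hMs | hsM := lt_or_ge M s
  · simp [saalschutzTerm_eq_zero, hMs]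
  obtain ⟨i, rfl⟩ := Nat.exists_eq_add_of_le hsM
  obtain ⟨j, rfl⟩ := Nat.exists_eq_add_of_le hsK
  have hc0 : a + b + 1 ≠ 0 := by simpa using hc 0
  have hci : a + b + 1 + i ≠ 0 := by simpa using add_natCast_ne_neg hc i 0
  have := poch_ne_zero hc i
  have hN : ((s + i + 1 : ℕ) : ℝ) * (s + i).choose s = (s + i + 1).choose (s + 1) * (s + 1 : ℕ) :=
    mod_cast Nat.add_one_mul_choose_eq (s + i) s
  have hK : ((s + j).choose (s + 1) : ℝ) * (s + 1 : ℕ) = (s + j).choose s * j := by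
    exact_mod_cast (by simpa using Nat.choose_succ_right_eq (s + j) s)
  have hb : poch b (s + i + 1 + (s + j + 1) - (s + 1)) = b * poch (b + 1) (s + i + j) := by
    rw [← poch_succ_left]; congr 1; omega
  have pascal : ((s + j + 1).choose (s + 1) : ℝ) = (s + j).choose s + (s + j).choose (s + 1) := by
    exact_mod_cast Nat.choose_succ_succ (s + j) s
  have hindex : s + i + 1 + (s + j) - (s + 1) = s + i + j := by omega
  have hindex_pred : s + i + (s + j) - s = s + i + j := by omega
  have hdegree : s + j - (s + 1) = j - 1 := by omega
  have hparam : a + (b + 1) + 1 = a + b + 1 + 1 := by ring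
  have hshift : ((s + 1 : ℕ) : ℝ) - (s + i + 1 : ℕ) - a = -i - a := by push_cast; ring
  have hshift_pred : (s : ℝ) - (s + i : ℕ) - a = -i - a := by push_cast; ring
  simp only [saalschutzTerm, hb, pascal, hindex, hindex_pred, hdegree, hparam, hshift,
    hshift_pred, Nat.add_sub_add_right, Nat.add_sub_cancel_left, poch_add_one_eq hc0,
    Nat.factorial_succ]
  push_cast at hN hK ⊢
  field_simp
  linear_combination -(b * poch (b + 1) (s + i + j)) *
    ((s + 1) * (a + b + 1 + (s + i + 1)) * (s + i + 1).choose (s + 1) *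
        -choose_succ_mul_poch (-i - a) s j +
      poch (-i - a) j * (a + b + 1 + i - j) * (s + j).choose s * hN +
      poch (-i - a) j * (s + i + 1).choose (s + 1) * (s + 1) * hK)

theorem sum_saalschutzTerm {a b : ℝ} (hc : ∀ m : ℕ, a + b + 1 ≠ -(m : ℝ)) (N K : ℕ) :
    ∑ s ∈ range (K + 1), saalschutzTerm a b N K s =
      poch (-a) K * poch b K * poch b N / poch (a + b + 1) N := by
  induction K generalizing N b with
  | zero => simp [saalschutzTerm, poch_zero]
  | succ K ih =>
    cases N with
    | zero =>
      rw [sum_range_succ', sum_eq_zero fun s _ ↦ saalschutzTerm_eq_zero s.succ_pos ..]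
      simp [saalschutzTerm, poch_zero, mul_comm]
    | succ M =>
      have hc' : ∀ m : ℕ, a + (b + 1) + 1 ≠ -(m : ℝ) := fun m ↦ by
        simpa [add_assoc] using add_natCast_ne_neg hc 1 m
      have hc0 : a + b + 1 ≠ 0 := by simpa using hc 0
      have hcM : a + b + 1 + M ≠ 0 := by simpa using add_natCast_ne_neg hc M 0
      have hcM1 : a + b + 1 + (M + 1) ≠ 0 := by simpa using add_natCast_ne_neg hc (M + 1) 0
      have := poch_ne_zero hc M
      have hlast : saalschutzTerm a (b + 1) (M + 1) K (K + 1) = 0 := by simp [saalschutzTerm]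
      have extend := sum_range_succ' (saalschutzTerm a (b + 1) (M + 1) K) (K + 1)
      rw [sum_range_succ, hlast, add_zero, ih hc'] at extend
      rw [sum_range_succ', sum_congr rfl fun s hs ↦
          saalschutzTerm_succ hc (Nat.lt_succ_iff.1 (mem_range.1 hs)) M, sum_add_distrib,
        ← mul_sum, ← mul_sum, ih hc', saalschutzTerm_zero_succ hc]
      have closed_form : b / (a + b + 1) * ((a + b + 1 + (M + 1)) * (K - (M + 1) - a)) *
            (poch (-a) K * poch (b + 1) K * poch (b + 1) (M + 1) / poch (a + (b + 1) + 1) (M + 1)) +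
          b / (a + b + 1) * ((a + b + 1 + M - K) * (M + 1)) *
            (poch (-a) K * poch (b + 1) K * poch (b + 1) M / poch (a + (b + 1) + 1) M) =
          poch (-a) (K + 1) * poch b (K + 1) * poch b (M + 1) / poch (a + b + 1) (M + 1) := by
        rw [show a + (b + 1) + 1 = a + b + 1 + 1 by ring]
        simp only [poch_succ_left b, poch_succ (b + 1) M, poch_succ (-a), poch_add_one_eq hc0,
          poch_succ (a + b + 1)]
        push_cast
        field_simp
        ring
      push_cast at extend ⊢
      linear_combination closed_form -
        b / (a + b + 1) * ((a + b + 1 + (M + 1)) * (K - (M + 1) - a)) * extend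

lemma hasSum_poch_div_factorial_mul_pow (a : ℝ) {y : ℝ} (hy : |y| < 1) :
    HasSum (fun j ↦ poch a j / j ! * y ^ j) ((1 - y) ^ (-a)) := by
  have h := (Real.one_div_one_sub_rpow_hasFPowerSeriesOnBall_zero a).hasSum
    (y := y) (by simpa [enorm_eq_nnnorm] using! hy)
  have hpos : 0 ≤ 1 - y := by linarith [(abs_lt.mp hy).2]
  simpa [FormalMultilinearSeries.ofScalars_apply_eq, choose_add_sub_one_eq_poch_div,
    Real.rpow_neg hpos, mul_comm] using h

lemma abs_poch_le_geom {a x : ℝ} {n : ℕ} (hx : |x| ≤ |a| + n) {r : ℝ} (hr : 1 < r) (k : ℕ) :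
    |poch x k| ≤ (1 - r⁻¹) ^ (-|a|) * (1 - r⁻¹)⁻¹ ^ n * r ^ k * k ! := by
  have hr0 : 0 < r := one_pos.trans hr
  have hr1 : 0 < 1 - r⁻¹ := sub_pos.2 (inv_lt_one_of_one_lt₀ hr)
  have hsum := hasSum_poch_div_factorial_mul_pow (|a| + n) (y := r⁻¹) (by
    rw [abs_of_pos (inv_pos.2 hr0)]; exact inv_lt_one_of_one_lt₀ hr)
  have hterm := le_hasSum hsum k fun j _ ↦ by
    have := poch_nonneg (a := |a| + n) (by positivity) j
    positivity
  rw [neg_add, Real.rpow_add hr1, Real.rpow_neg hr1.le n, Real.rpow_natCast, ← inv_pow (1 - r⁻¹),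
    inv_pow r, ← div_eq_mul_inv, div_div, div_le_iff₀ (by positivity)] at hterm
  calc |poch x k| ≤ poch (|a| + n) k := abs_poch_le hx k
    _ ≤ _ := hterm
    _ = _ := by ring

/-- A sequence growing more slowly than every exponential `r ^ n` with `r > 1`; equivalently, a
sequence whose power series converges on the open unit disc. -/
def IsSubexponential (c : ℕ → ℝ) : Prop :=
  ∀ r : ℝ, 1 < r → c =O[atTop] fun n ↦ r ^ n

namespace IsSubexponential

variable {c e : ℕ → ℝ}

lemma abs (hc : IsSubexponential c) : IsSubexponential fun n ↦ |c n| :=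
  fun r hr ↦ (hc r hr).abs_left

lemma mul (hc : IsSubexponential c) (he : IsSubexponential e) :
    IsSubexponential fun n ↦ c n * e n := fun r hr ↦ by
  have hs : 1 < √r := Real.lt_sqrt_of_sq_lt (by simpa using hr)
  simpa [← mul_pow, Real.mul_self_sqrt (one_pos.trans hr).le] using (hc _ hs).mul (he _ hs)

lemma of_sq (hc : IsSubexponential fun n ↦ c n ^ 2) : IsSubexponential c := fun r hr ↦ by
  refine IsBigO.of_pow two_ne_zero ((hc (r ^ 2) (one_lt_pow₀ hr two_ne_zero)).congr_right ?_)
  exact fun n ↦ (pow_right_comm r n 2).symm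

lemma exists_abs_le (hc : IsSubexponential c) {r : ℝ} (hr : 1 < r) :
    ∃ C > 0, ∀ n, |c n| ≤ C * r ^ n := by
  obtain ⟨C, hC, h⟩ := bound_of_isBigO_nat_atTop (hc r hr)
  have hr0 : 0 < r := one_pos.trans hr
  exact ⟨C, hC, fun n ↦ by simpa [abs_of_pos hr0] using h (x := n) (by positivity)⟩

lemma of_abs_succ_le (h : ∀ r : ℝ, 1 < r → ∀ᶠ n in atTop, |c (n + 1)| ≤ r * |c n|) :
    IsSubexponential c := fun r hr ↦ by
  obtain ⟨s, hs1, hsr⟩ := exists_between hr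
  have hr0 : 0 < r := one_pos.trans hr
  have hsum : Summable fun n ↦ c n / r ^ n := by
    refine summable_of_ratio_norm_eventually_le ((div_lt_one hr0).2 hsr) ?_
    filter_upwards [h s hs1] with n hn
    rw [norm_div, norm_div, norm_pow, norm_pow, Real.norm_of_nonneg hr0.le, pow_succ,
      Real.norm_eq_abs, Real.norm_eq_abs]
    calc |c (n + 1)| / (r ^ n * r) ≤ s * |c n| / (r ^ n * r) := by gcongr
      _ = s / r * (|c n| / r ^ n) := by field_simp
  exact isBigO_of_div_tendsto_nhds (.of_forall fun n hn ↦ absurd hn (by positivity)) 0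
    hsum.tendsto_atTop_zero

lemma of_succ_eq_mul {q : ℕ → ℝ} (hq : Tendsto q atTop (𝓝 1))
    (h : ∀ n, c (n + 1) = q n * c n) : IsSubexponential c := by
  refine of_abs_succ_le fun r hr ↦ ?_
  filter_upwards [hq.abs.eventually_le_const (by simpa using hr)] with n hn
  rw [h, abs_mul]
  gcongr

lemma one_le_radius (hc : IsSubexponential c) :
    1 ≤ (FormalMultilinearSeries.ofScalars ℝ c).radius := by
  refine ENNReal.le_of_forall_nnreal_lt fun r hr ↦ ?_
  obtain rfl | hr0 := eq_zero_or_pos r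
  · simp
  have hr0' : (0 : ℝ) < r := hr0
  have h := (hc (r⁻¹ : ℝ) ((one_lt_inv₀ hr0').2 (mod_cast hr))).norm_left.mul
    (isBigO_refl (fun n ↦ (r : ℝ) ^ n) atTop)
  refine FormalMultilinearSeries.le_radius_of_isBigO _ (h.congr (fun n ↦ ?_) fun n ↦ ?_)
  · rw [FormalMultilinearSeries.ofScalars_norm]
  · rw [← mul_pow, inv_mul_cancel₀ hr0'.ne', one_pow]

lemma hasFPowerSeriesOnBall (hc : IsSubexponential c) :
    HasFPowerSeriesOnBall (fun x ↦ ∑' n, c n * x ^ n) (.ofScalars ℝ c) 0 1 := by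
  have hball := (FormalMultilinearSeries.ofScalars ℝ c).hasFPowerSeriesOnBall
    (one_pos.trans_le hc.one_le_radius)
  exact (hball.mono one_pos hc.one_le_radius).congr fun x _ ↦
    FormalMultilinearSeries.ofScalars_sum_eq c x

lemma hasSum (hc : IsSubexponential c) {x : ℝ} (hx : |x| < 1) :
    HasSum (fun n ↦ c n * x ^ n) (∑' n, c n * x ^ n) := by
  simpa [FormalMultilinearSeries.ofScalars_apply_eq, mul_comm] using
    hc.hasFPowerSeriesOnBall.hasSum (y := x) (by simpa [enorm_eq_nnnorm] using! hx)

lemma summable (hc : IsSubexponential c) {x : ℝ} (hx : |x| < 1) :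
    Summable fun n ↦ c n * x ^ n :=
  (hc.hasSum hx).summable

lemma analyticOnNhd (hc : IsSubexponential c) :
    AnalyticOnNhd ℝ (fun x ↦ ∑' n, c n * x ^ n) (Set.Ioo (-1) 1) :=
  hc.hasFPowerSeriesOnBall.analyticOnNhd.mono fun x hx ↦ by
    simpa [enorm_eq_nnnorm] using! abs_lt.2 hx

end IsSubexponential

lemma one_sub_half_abs_mul_le (c u v : ℝ) :
    (1 - |c| / 2) * (u ^ 2 + v ^ 2) ≤ u ^ 2 - c * u * v + v ^ 2 := by
  have hc : c * (u * v) ≤ |c| * |u * v| := (le_abs_self _).trans (abs_mul ..).le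
  have huv : |u * v| ≤ (u ^ 2 + v ^ 2) / 2 := by
    rw [abs_le]; constructor <;> nlinarith [sq_nonneg (u + v), sq_nonneg (u - v)]
  nlinarith [mul_le_mul_of_nonneg_left huv (abs_nonneg c)]

lemma quadratic_form_le {α β γ ε : ℝ} (hα : |α| ≤ ε) (hβ : |β| ≤ ε) (hγ : |γ| ≤ ε) (u v : ℝ) :
    α * u ^ 2 + β * (u * v) + γ * v ^ 2 ≤ 2 * ε * (u ^ 2 + v ^ 2) := by
  rw [abs_le] at hα hβ hγ
  nlinarith [sq_nonneg u, sq_nonneg v, sq_nonneg (u + v), sq_nonneg (u - v)]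

theorem IsSubexponential.of_second_order_recurrence {p A B : ℕ → ℝ} {c : ℝ} (hc : |c| < 2)
    (hA : Tendsto A atTop (𝓝 c)) (hB : Tendsto B atTop (𝓝 1))
    (h : ∀ᶠ n in atTop, p (n + 2) = A n * p (n + 1) - B n * p n) : IsSubexponential p := by
  -- The quadratic form conserved by the limiting recurrence `p (n + 2) = c * p (n + 1) - p n`.
  set energy : ℕ → ℝ := fun n ↦ p (n + 1) ^ 2 - c * p (n + 1) * p n + p n ^ 2 with henergy
  have hκ : 0 < 1 - |c| / 2 := by linarith
  have energy_ge (n : ℕ) : (1 - |c| / 2) * (p (n + 1) ^ 2 + p n ^ 2) ≤ energy n :=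
    one_sub_half_abs_mul_le ..
  have energy_nonneg (n : ℕ) : 0 ≤ energy n := (by positivity : (0 : ℝ) ≤ _).trans (energy_ge n)
  have energy_subexp : IsSubexponential energy := .of_abs_succ_le fun r hr ↦ by
    obtain ⟨ε, hε, hεr⟩ : ∃ ε > 0, 2 * ε = (r - 1) * (1 - |c| / 2) :=
      ⟨(r - 1) * (1 - |c| / 2) / 2, by have := sub_pos.2 hr; positivity, by ring⟩
    have hα : Tendsto (fun n ↦ A n ^ 2 - c * A n) atTop (𝓝 0) := by
      simpa [sq] using (hA.pow 2).sub (hA.const_mul c)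
    have hβ : Tendsto (fun n ↦ -2 * (A n * B n) + c * B n + c) atTop (𝓝 0) := by
      convert (((hA.mul hB).const_mul (-2)).add (hB.const_mul c)).add_const c using 2
      ring
    have hγ : Tendsto (fun n ↦ B n ^ 2 - 1) atTop (𝓝 0) := by
      simpa using (hB.pow 2).sub_const 1
    filter_upwards [h, hα.abs.eventually_le_const (by simpa using hε),
      hβ.abs.eventually_le_const (by simpa using hε),
      hγ.abs.eventually_le_const (by simpa using hε)] with n hn hα hβ hγ
    have energy_succ : energy (n + 1) = energy n + ((A n ^ 2 - c * A n) * p (n + 1) ^ 2 +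
        (-2 * (A n * B n) + c * B n + c) * (p (n + 1) * p n) + (B n ^ 2 - 1) * p n ^ 2) := by
      simp only [henergy, hn]
      ring
    rw [abs_of_nonneg (energy_nonneg _), abs_of_nonneg (energy_nonneg _), energy_succ]
    have herr := quadratic_form_le hα hβ hγ (p (n + 1)) (p n)
    rw [hεr, mul_assoc] at herr
    linarith [mul_le_mul_of_nonneg_left (energy_ge n) (sub_pos.2 hr).le]
  refine .of_sq fun r hr ↦ (IsBigO.of_bound (1 - |c| / 2)⁻¹ (.of_forall fun n ↦ ?_)).trans
    (energy_subexp r hr)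
  rw [norm_pow, Real.norm_eq_abs, sq_abs, Real.norm_of_nonneg (energy_nonneg n), inv_mul_eq_div,
    le_div_iff₀' hκ]
  exact (by gcongr; linarith [sq_nonneg (p (n + 1))] : _ ≤ _).trans (energy_ge n)

lemma isSubexponential_poch_div_poch (a c : ℝ) :
    IsSubexponential fun k ↦ poch a k / poch c k := by
  have hq : Tendsto (fun k : ℕ ↦ (a + k) / (c + k)) atTop (𝓝 1) := by
    simpa using tendsto_add_mul_div_add_mul_atTop_nhds a c 1 one_ne_zero
  refine .of_succ_eq_mul hq fun k ↦ ?_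
  rw [poch_succ, poch_succ, mul_div_mul_comm, mul_comm]

/-- The coefficient `(a)_k (b)_k / ((c)_k k!)` of `x ^ k` in the hypergeometric series
`F(a,b;c;x)`. -/
def hypCoeff (a b c : ℝ) (k : ℕ) : ℝ := poch a k * poch b k / (poch c k * k !)

lemma isSubexponential_poch_div_factorial (a : ℝ) : IsSubexponential fun k ↦ poch a k / k ! := by
  simpa only [poch_one] using isSubexponential_poch_div_poch a 1

lemma isSubexponential_hypCoeff (a b c : ℝ) : IsSubexponential (hypCoeff a b c) := by
  convert (isSubexponential_poch_div_poch a c).mul (isSubexponential_poch_div_factorial b) using 2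
  exact mul_div_mul_comm ..

lemma hasSum_hyp (a b c : ℝ) {x : ℝ} (hx : |x| < 1) :
    HasSum (fun k ↦ hypCoeff a b c k * x ^ k) (hyp a b c x) :=
  (isSubexponential_hypCoeff a b c).hasSum hx

lemma analyticOnNhd_hyp (a b c : ℝ) : AnalyticOnNhd ℝ (hyp a b c) (Set.Ioo (-1) 1) :=
  (isSubexponential_hypCoeff a b c).analyticOnNhd

lemma hyp_zero (a b c : ℝ) : hyp a b c 0 = 1 := by
  rw [hyp, tsum_eq_single 0 fun k hk ↦ by simp [hk]]
  simp [poch_zero]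

lemma hyp_comm (a b c x : ℝ) : hyp a b c x = hyp b a c x := by
  simp only [hyp, mul_comm (poch a _)]

lemma hypCoeff_succ_contiguous {c : ℝ} (hc : ∀ m : ℕ, c ≠ -(m : ℝ)) (a b : ℝ) (k : ℕ) :
    2 * b * (c - a) * (b - a - 1) * hypCoeff (a - 1) (b + 1) c (k + 1) -
        ((b - a - 1) * (b - a) * (b - a + 1) + (b - a) * (b + a - 1) * (2 * c - b - a - 1)) *
          hypCoeff a b c (k + 1) -
        2 * a * (b - c) * (b - a + 1) * hypCoeff (a + 1) (b - 1) c (k + 1) =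
      -2 * ((b - a - 1) * (b - a) * (b - a + 1)) * hypCoeff a b c k := by
  have raise (a : ℝ) : a * poch (a + 1) (k + 1) = poch a k * (a + k) * (a + k + 1) := by
    rw [← poch_succ_left, poch_succ, poch_succ]; push_cast; ring
  have lower (a : ℝ) : poch (a - 1) (k + 1) = (a - 1) * poch a k := by
    rw [poch_succ_left, sub_add_cancel]
  have hck : c + k ≠ 0 := by simpa using add_natCast_ne_neg hc k 0
  have := poch_ne_zero hc k
  simp only [hypCoeff, lower, poch_succ c, poch_succ a, poch_succ b, Nat.factorial_succ]
  push_cast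
  field_simp
  linear_combination 2 * (c - a) * (b - a - 1) * (a - 1) * poch a k * raise b -
    2 * (b - c) * (b - a + 1) * (b - 1) * poch b k * raise a

theorem hyp_contiguous {c : ℝ} (hc : ∀ m : ℕ, c ≠ -(m : ℝ)) (a b : ℝ) {x : ℝ} (hx : |x| < 1) :
    2 * b * (c - a) * (b - a - 1) * hyp (a - 1) (b + 1) c x =
      ((1 - 2 * x) * ((b - a - 1) * (b - a) * (b - a + 1)) +
          (b - a) * (b + a - 1) * (2 * c - b - a - 1)) * hyp a b c x +
        2 * a * (b - c) * (b - a + 1) * hyp (a + 1) (b - 1) c x := by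
  have hsum := ((((hasSum_hyp (a - 1) (b + 1) c hx).mul_left (2 * b * (c - a) * (b - a - 1))).sub
    ((hasSum_hyp a b c hx).mul_left ((b - a - 1) * (b - a) * (b - a + 1) +
      (b - a) * (b + a - 1) * (2 * c - b - a - 1)))).sub
    ((hasSum_hyp (a + 1) (b - 1) c hx).mul_left (2 * a * (b - c) * (b - a + 1))))
  have hshift := ((hasSum_nat_add_iff' 1).2 hsum).unique <|
    ((hasSum_hyp a b c hx).mul_left (-2 * ((b - a - 1) * (b - a) * (b - a + 1)) * x)).congr_fun
      fun k ↦ by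
        rw [pow_succ]
        linear_combination x ^ k * x * hypCoeff_succ_contiguous hc a b k
  simp only [sum_range_one, hypCoeff, poch_zero, Nat.factorial_zero] at hshift
  linear_combination hshift

theorem isSubexponential_hyp_neg_natCast_sub {c x : ℝ} (hc : ∀ m : ℕ, c ≠ -(m : ℝ)) (hx0 : 0 < x)
    (hx1 : x < 1) (a b : ℝ) : IsSubexponential fun n : ℕ ↦ hyp (-n - a) (n + b) c x := by
  have ratio (u v p : ℝ) {q : ℝ} (hq : q ≠ 0) :
      Tendsto (fun n : ℕ ↦ (u + p * n) / (v + q * n)) atTop (𝓝 (p / q)) :=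
    tendsto_add_mul_div_add_mul_atTop_nhds u v p hq
  have hA := (((ratio (2 + a + b) (1 + b) 2 one_ne_zero).mul
    (ratio (3 + a + b) (c + 1 + a) 2 one_ne_zero)).const_mul ((1 - 2 * x) / 2)).add
    (((ratio (2 + a + b) (1 + a + b) 2 two_ne_zero).mul
      ((ratio (b - a - 1) (1 + b) 0 one_ne_zero).mul
        (ratio (2 * c - b + a - 1) (c + 1 + a) 0 one_ne_zero))).const_mul (1 / 2))
  have hB := ((ratio (1 + a) (1 + b) 1 one_ne_zero).mul
    (ratio (1 + b - c) (c + 1 + a) 1 one_ne_zero)).mul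
      (ratio (3 + a + b) (1 + a + b) 2 two_ne_zero)
  norm_num at hA hB
  refine .of_second_order_recurrence ?_ hA hB ?_
  · rw [abs_lt]; constructor <;> linarith
  have large (u : ℝ) : ∀ᶠ n : ℕ in atTop, -u < (n : ℝ) :=
    tendsto_natCast_atTop_atTop.eventually_gt_atTop _
  filter_upwards [large (1 + b), large (c + 1 + a), large (1 + a + b)] with n h1 h2 h3
  have hcont := hyp_contiguous hc (-(n + 1) - a) (n + 1 + b) (x := x) (by rwa [abs_of_pos hx0])
  have ha_pred : -(n + 1 : ℝ) - a - 1 = -(n + 2) - a := by ring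
  have hb_succ : (n : ℝ) + 1 + b + 1 = n + 2 + b := by ring
  have ha_succ : -(n + 1 : ℝ) - a + 1 = -n - a := by ring
  have hb_pred : (n : ℝ) + 1 + b - 1 = n + b := by ring
  rw [ha_pred, hb_succ, ha_succ, hb_pred] at hcont
  have hb : 1 + b + n ≠ 0 := by linarith
  have hca : c + 1 + a + n ≠ 0 := by linarith
  have hab : 1 + a + b + n * 2 ≠ 0 := by linarith [n.cast_nonneg (α := ℝ)]
  push_cast
  field_simp
  linear_combination hcont

section FiniteFibers

variable {ι κ M : Type*} [AddCommMonoid M] [TopologicalSpace M] {g : ι → κ} {t : κ → Finset ι}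

lemma hasSum_fiber (ht : ∀ i k, i ∈ t k ↔ g i = k) (f : ι → M) (k : κ) :
    HasSum (fun i : {i // g i = k} ↦ f i) (∑ i ∈ t k, f i) := by
  have hset : {i | g i = k} = (t k : Set ι) := by ext i; simp [ht]
  change HasSum (f ∘ ((↑) : {i | g i = k} → ι)) _
  rw [hset]
  exact (t k).hasSum f

lemma hasSum_sum_fibers [ContinuousAdd M] [RegularSpace M] (ht : ∀ i k, i ∈ t k ↔ g i = k)
    {f : ι → M} {a : M} (hf : HasSum f a) :
    HasSum (fun k ↦ ∑ i ∈ t k, f i) a :=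
  ((Equiv.sigmaFiberEquiv g).hasSum_iff.2 hf).sigma (hasSum_fiber ht f)

lemma summable_of_summable_sum_fibers (ht : ∀ i k, i ∈ t k ↔ g i = k) {f : ι → ℝ}
    (hf0 : 0 ≤ f) (hf : Summable fun k ↦ ∑ i ∈ t k, f i) : Summable f := by
  refine (Equiv.sigmaFiberEquiv g).summable_iff.1 ((summable_sigma_of_nonneg fun _ ↦ hf0 _).2 ?_)
  exact ⟨fun k ↦ (hasSum_fiber ht f k).summable,
    hf.congr fun k ↦ ((hasSum_fiber ht f k).tsum_eq).symm⟩

end FiniteFibers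

lemma sum_antidiagonal_pow_mul_pow_div_factorial (x w : ℝ) (k : ℕ) :
    ∑ q ∈ antidiagonal k, x ^ q.1 * w ^ q.2 / (q.1 ! * q.2 !) = (x + w) ^ k / k ! := by
  rw [(Commute.all x w).add_pow', sum_div]
  refine sum_congr rfl fun ⟨i, j⟩ hq ↦ ?_
  obtain rfl : i + j = k := by simpa using hq
  have hchoose : ((i + j).choose i : ℝ) ≠ 0 := mod_cast (Nat.choose_pos (Nat.le_add_right i j)).ne'
  rw [nsmul_eq_mul, ← Nat.add_choose_mul_factorial_mul_factorial, ← Nat.choose_symm_add]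
  push_cast
  field_simp

section TripleSeries

/-- The general term `(α)_{i+m+j} e_{i+m} x^i w^m y^j / (i! m! j!)` of a triple power series which
can be summed over `j` by the binomial series and over `i + m` by the binomial theorem. -/
def tripleTerm (e : ℕ → ℝ) (α x w y : ℝ) (p : (ℕ × ℕ) × ℕ) : ℝ :=
  poch α (p.1.1 + p.1.2 + p.2) * e (p.1.1 + p.1.2) *
    (x ^ p.1.1 * w ^ p.1.2 / (p.1.1 ! * p.1.2 !)) * (y ^ p.2 / p.2 !)

/-- The sum over `j` of `tripleTerm`. -/
def doubleTerm (e : ℕ → ℝ) (α x w y : ℝ) (q : ℕ × ℕ) : ℝ :=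
  poch α (q.1 + q.2) * e (q.1 + q.2) * (1 - y) ^ (-(α + ↑(q.1 + q.2))) *
    (x ^ q.1 * w ^ q.2 / (q.1 ! * q.2 !))

variable {e : ℕ → ℝ} {α x w y : ℝ}

lemma hasSum_tripleTerm_right (hy : |y| < 1) (q : ℕ × ℕ) :
    HasSum (fun j ↦ tripleTerm e α x w y (q, j)) (doubleTerm e α x w y q) := by
  simp only [tripleTerm, doubleTerm, poch_add α (q.1 + q.2)]
  have h := (hasSum_poch_div_factorial_mul_pow (α + ↑(q.1 + q.2)) hy).mul_left
    (poch α (q.1 + q.2) * e (q.1 + q.2) * (x ^ q.1 * w ^ q.2 / (q.1 ! * q.2 !)))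
  rw [mul_right_comm _ (_ / _)] at h
  exact h.congr_fun fun j ↦ by ring

lemma sum_antidiagonal_doubleTerm (hy : |y| < 1) (k : ℕ) :
    ∑ q ∈ antidiagonal k, doubleTerm e α x w y q =
      (1 - y) ^ (-α) * (poch α k / k ! * e k * ((x + w) / (1 - y)) ^ k) := by
  have hy1 : 0 < 1 - y := by linarith [(abs_lt.1 hy).2]
  calc ∑ q ∈ antidiagonal k, doubleTerm e α x w y q
      = poch α k * e k * (1 - y) ^ (-(α + k)) *
          ∑ q ∈ antidiagonal k, x ^ q.1 * w ^ q.2 / (q.1 ! * q.2 !) := by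
        rw [mul_sum]
        refine sum_congr rfl fun q hq ↦ ?_
        rw [doubleTerm, mem_antidiagonal.1 hq]
    _ = _ := by
        rw [sum_antidiagonal_pow_mul_pow_div_factorial, neg_add, Real.rpow_add hy1,
          Real.rpow_neg hy1.le k, Real.rpow_natCast, div_pow]
        ring

lemma abs_tripleTerm_le (e : ℕ → ℝ) (α x w y : ℝ) (p : (ℕ × ℕ) × ℕ) :
    |tripleTerm e α x w y p| ≤ tripleTerm (|e ·|) |α| |x| |w| |y| p := by
  simp only [tripleTerm, abs_mul, abs_div, abs_pow, Nat.abs_cast]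
  gcongr
  exact abs_poch_le le_rfl _

lemma abs_add_div_one_sub_lt_one (h : |x| + |w| + |y| < 1) : |(x + w) / (1 - y)| < 1 := by
  have hy1 : 0 < 1 - y := by linarith [le_abs_self y, abs_nonneg x, abs_nonneg w]
  rw [abs_div, abs_of_pos hy1, div_lt_one hy1]
  linarith [abs_add_le x w, le_abs_self y]

lemma summable_tripleTerm (he : IsSubexponential e) (h : |x| + |w| + |y| < 1) :
    Summable (tripleTerm e α x w y) := by
  refine .of_norm_bounded ?_ (abs_tripleTerm_le e α x w y)
  have hy : |(|y|)| < 1 := by rw [abs_abs]; linarith [abs_nonneg x, abs_nonneg w]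
  have hy1 : 0 ≤ 1 - |y| := by linarith [le_abs_self |y|]
  have hsum (q : ℕ × ℕ) := hasSum_tripleTerm_right (e := (|e ·|)) (α := |α|) (x := |x|)
    (w := |w|) hy q
  rw [summable_prod_of_nonneg fun p ↦ (abs_nonneg _).trans (abs_tripleTerm_le e α x w y p)]
  refine ⟨fun q ↦ (hsum q).summable, ?_⟩
  simp only [fun q ↦ (hsum q).tsum_eq]
  refine summable_of_summable_sum_fibers (g := fun q ↦ q.1 + q.2) (t := antidiagonal)
    (fun q k ↦ HasAntidiagonal.mem_antidiagonal) (fun q ↦ ?_) ?_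
  · have := poch_nonneg (abs_nonneg α) (q.1 + q.2)
    simp only [doubleTerm]
    positivity
  · simp only [sum_antidiagonal_doubleTerm hy]
    exact (((isSubexponential_poch_div_factorial |α|).mul he.abs).summable
      (abs_add_div_one_sub_lt_one (by simpa using h))).mul_left _

theorem hasSum_tripleTerm (he : IsSubexponential e) (h : |x| + |w| + |y| < 1) :
    HasSum (tripleTerm e α x w y)
      ((1 - y) ^ (-α) * ∑' k, poch α k / k ! * e k * ((x + w) / (1 - y)) ^ k) := by
  have hy : |y| < 1 := by linarith [abs_nonneg x, abs_nonneg w]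
  have htriple := (summable_tripleTerm (α := α) he h).hasSum
  have hdouble := htriple.prod_fiberwise (hasSum_tripleTerm_right hy)
  have hk := hasSum_sum_fibers (fun q k ↦ HasAntidiagonal.mem_antidiagonal) hdouble
  simp only [sum_antidiagonal_doubleTerm hy] at hk
  rwa [hk.unique ((((isSubexponential_poch_div_factorial α).mul he).hasSum
    (abs_add_div_one_sub_lt_one h)).mul_left _)] at htriple

end TripleSeries

/-- The general term of Appell's double series `F₁(α; β, γ - β; γ; x, y)`, whose parameters are
special enough for the series to reduce to a Gauss hypergeometric series. -/
def appellTerm (α β γ x y : ℝ) (p : ℕ × ℕ) : ℝ :=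
  poch α (p.1 + p.2) * poch β p.1 * poch (γ - β) p.2 / (poch γ (p.1 + p.2) * (p.1 ! * p.2 !)) *
    (x ^ p.1 * y ^ p.2)

lemma sum_antidiagonal_tripleTerm {γ : ℝ} (hγ : ∀ m : ℕ, γ ≠ -(m : ℝ)) (α β x y : ℝ) (i s : ℕ) :
    ∑ q ∈ antidiagonal s,
        tripleTerm (fun k ↦ poch β k / poch γ k) α x (-y) y ((i, q.1), q.2) =
      appellTerm α β γ x y (i, s) := by
  have vandermonde := sum_antidiagonal_poch_div_factorial (add_natCast_ne_neg hγ i) (β + i) s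
  rw [add_sub_add_right_eq_sub] at vandermonde
  calc _ = poch α (i + s) * poch β i / (poch γ i * i !) * (x ^ i * y ^ s) *
        ∑ q ∈ antidiagonal s, (-1) ^ q.1 * poch (β + i) q.1 /
          (poch (γ + i) q.1 * (q.1 ! * q.2 !)) := by
        rw [mul_sum]
        refine sum_congr rfl fun ⟨m, j⟩ hq ↦ ?_
        obtain rfl : m + j = s := by simpa using hq
        simp only [tripleTerm, poch_add β, poch_add γ, neg_pow y, pow_add, add_assoc]
        ring
    _ = _ := by
        rw [vandermonde, appellTerm, poch_add γ]
        ring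

theorem hasSum_appellTerm {γ : ℝ} (hγ : ∀ m : ℕ, γ ≠ -(m : ℝ)) (α β : ℝ) {x y : ℝ}
    (h : |x| + 2 * |y| < 1) :
    HasSum (appellTerm α β γ x y) ((1 - y) ^ (-α) * hyp α β γ ((x - y) / (1 - y))) := by
  have htriple := hasSum_tripleTerm (x := x) (w := -y) (y := y) (α := α)
    (isSubexponential_poch_div_poch β γ) (by rw [abs_neg]; linarith)
  have hfib := hasSum_sum_fibers (g := fun p : (ℕ × ℕ) × ℕ ↦ (p.1.1, p.1.2 + p.2))
    (t := fun q ↦ (antidiagonal q.2).image fun r ↦ ((q.1, r.1), r.2))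
    (fun ⟨⟨i, m⟩, j⟩ ⟨i', s⟩ ↦ by simp [and_comm, eq_comm]) htriple
  have hinj (i s : ℕ) : Set.InjOn (fun r : ℕ × ℕ ↦ ((i, r.1), r.2)) (antidiagonal s) :=
    fun r _ r' _ hr ↦ by simpa [Prod.ext_iff] using hr
  simp only [sum_image (hinj _ _), sum_antidiagonal_tripleTerm hγ] at hfib
  convert hfib using 2
  rw [hyp, ← sub_eq_add_neg]
  exact tsum_congr fun k ↦ by rw [mul_div_mul_comm]; ring

theorem hyp_pfaff {c : ℝ} (hc : ∀ m : ℕ, c ≠ -(m : ℝ)) (a b : ℝ) {z : ℝ} (hz : |z| < 1 / 2) :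
    hyp a b c z = (1 - z) ^ (-a) * hyp a (c - b) c (z / (z - 1)) := by
  have happell := hasSum_appellTerm hc a (c - b) (x := 0) (y := z) (by rw [abs_zero]; linarith)
  rw [← (Prod.mk_right_injective 0).hasSum_iff] at happell
  · rw [show (0 - z) / (1 - z) = z / (z - 1) by rw [zero_sub, ← neg_sub z 1, neg_div_neg_eq]]
      at happell
    refine (hasSum_hyp a b c (by linarith)).unique (happell.congr_fun fun k ↦ ?_)
    simp [appellTerm, hypCoeff, poch_zero]
  · rintro ⟨i, s⟩ hp
    have hi : i ≠ 0 := fun h ↦ hp ⟨s, by rw [h]⟩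
    simp [appellTerm, hi]

lemma analyticAt_rpow_const {f : ℝ → ℝ} {x : ℝ} (hf : AnalyticAt ℝ f x) (h : 0 < f x) (p : ℝ) :
    AnalyticAt ℝ (fun y ↦ f y ^ p) x := by
  refine ((hf.log h).mul (analyticAt_const (v := p))).rexp.congr ?_
  filter_upwards [hf.continuousAt.eventually (lt_mem_nhds h)] with y hy
  exact (Real.rpow_def_of_pos hy p).symm

lemma hypExt_of_nonneg {z : ℝ} (hz : 0 ≤ z) (a b c : ℝ) : hypExt a b c z = hyp a b c z :=
  if_neg hz.not_gt

lemma hypExt_of_neg {z : ℝ} (hz : z < 0) (a b c : ℝ) :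
    hypExt a b c z = (1 - z) ^ (-a) * hyp a (c - b) c (z / (z - 1)) :=
  if_pos hz

theorem hypExt_pfaff {z : ℝ} (hz : z < 1) (a b c : ℝ) :
    hypExt a b c z = (1 - z) ^ (-a) * hypExt a (c - b) c (z / (z - 1)) := by
  have hz1 : z - 1 < 0 := by linarith
  have hz1' : 0 < 1 - z := by linarith
  obtain hneg | hnonneg := lt_or_ge z 0
  · rw [hypExt_of_neg hneg, hypExt_of_nonneg (div_pos_of_neg_of_neg hneg hz1).le]
  obtain rfl | hpos := hnonneg.eq_or_lt
  · simp [hypExt_of_nonneg, hyp_zero]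
  have hinv : 1 - z / (z - 1) = (1 - z)⁻¹ := by
    rw [one_sub_div hz1.ne, sub_sub_cancel_left, neg_div, ← one_div, ← neg_sub z 1, div_neg]
  have hinvol : z / (z - 1) / (z / (z - 1) - 1) = z := by
    rw [← neg_sub 1 (z / (z - 1)), hinv, div_neg, div_inv_eq_mul, ← neg_sub z 1, mul_neg, neg_neg,
      div_mul_cancel₀ _ hz1.ne]
  rw [hypExt_of_nonneg hpos.le, hypExt_of_neg (div_neg_of_pos_of_neg hpos hz1), hinv, hinvol,
    sub_sub_cancel, Real.inv_rpow hz1'.le, ← mul_assoc,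
    mul_inv_cancel₀ (Real.rpow_pos_of_pos hz1' _).ne', one_mul]

lemma hypExt_eventuallyEq_hyp {c : ℝ} (hc : ∀ m : ℕ, c ≠ -(m : ℝ)) (a b : ℝ) :
    hypExt a b c =ᶠ[𝓝 0] hyp a b c := by
  filter_upwards [Metric.ball_mem_nhds (0 : ℝ) one_half_pos] with z hz
  obtain h | h := lt_or_ge z 0
  · rw [hypExt_of_neg h, hyp_pfaff hc a b (by simpa using hz)]
  · exact hypExt_of_nonneg h a b c

theorem analyticAt_hypExt {c : ℝ} (hc : ∀ m : ℕ, c ≠ -(m : ℝ)) (a b : ℝ) {z : ℝ} (hz : z < 1) :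
    AnalyticAt ℝ (hypExt a b c) z := by
  have hz1 : z - 1 ≠ 0 := by linarith
  obtain h | rfl | h := lt_trichotomy z 0
  · have hpow : AnalyticAt ℝ (fun z ↦ (1 - z) ^ (-a)) z :=
      analyticAt_rpow_const (by fun_prop) (by linarith) _
    have harg : AnalyticAt ℝ (fun z ↦ z / (z - 1)) z := by fun_prop (disch := assumption)
    have hhyp := analyticOnNhd_hyp a (c - b) c (z / (z - 1))
      ⟨by linarith [div_pos_of_neg_of_neg h (by linarith : z - 1 < 0)],
        by rw [div_lt_one_of_neg (by linarith)]; linarith⟩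
    refine (hpow.mul (hhyp.fun_comp (f := fun z ↦ z / (z - 1)) harg)).congr ?_
    filter_upwards [gt_mem_nhds h] with y hy
    exact (hypExt_of_neg hy a b c).symm
  · exact (analyticOnNhd_hyp a b c 0 (by norm_num)).congr (hypExt_eventuallyEq_hyp hc a b).symm
  · refine (analyticOnNhd_hyp a b c z ⟨by linarith, hz⟩).congr ?_
    filter_upwards [lt_mem_nhds h] with y hy
    exact (hypExt_of_nonneg hy.le a b c).symm

lemma exists_abs_appellTerm_le (a b d : ℝ) {r : ℝ} (hr : 1 < r) :
    ∃ C, ∀ (n : ℕ) (x y : ℝ) (p : ℕ × ℕ), |appellTerm (b + n) (-n - a) d x y p| ≤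
      C * ((1 - r⁻¹)⁻¹ ^ 3) ^ n * ((r ^ 3 * |x|) ^ p.1 * (r ^ 3 * |y|) ^ p.2) := by
  obtain ⟨D, -, hD⟩ := (isSubexponential_poch_div_poch 1 d).exists_abs_le hr
  have hα (n : ℕ) := abs_poch_le_geom (a := b) (x := b + n) (n := n)
    ((abs_add_le ..).trans_eq (by rw [Nat.abs_cast])) hr
  have hβ (n : ℕ) := abs_poch_le_geom (a := a) (x := -n - a) (n := n)
    ((abs_sub ..).trans_eq (by rw [abs_neg, Nat.abs_cast, add_comm])) hr
  have hγβ (n : ℕ) := abs_poch_le_geom (a := d + a) (x := d - (-n - a)) (n := n) (by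
    rw [show d - (-n - a) = d + a + n by ring]
    exact (abs_add_le ..).trans_eq (by rw [Nat.abs_cast])) hr
  have h1 : 0 < 1 - r⁻¹ := sub_pos.2 (inv_lt_one_of_one_lt₀ hr)
  have : 0 < r := one_pos.trans hr
  set P := (1 - r⁻¹)⁻¹
  set Ab := (1 - r⁻¹) ^ (-|b|)
  set Aa := (1 - r⁻¹) ^ (-|a|)
  set Ada := (1 - r⁻¹) ^ (-|d + a|)
  refine ⟨Ab * Aa * Ada * D, fun n x y ⟨i, s⟩ ↦ ?_⟩
  have factor : |appellTerm (b + n) (-n - a) d x y (i, s)| =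
      |poch (b + n) (i + s)| * |poch (-n - a) i| * |poch (d - (-n - a)) s| *
        |poch 1 (i + s) / poch d (i + s)| * (|x| ^ i * |y| ^ s) / ((i + s)! * i ! * s !) := by
    simp only [appellTerm, abs_mul, abs_div, abs_pow, Nat.abs_cast, poch_one]
    field_simp
  rw [factor, div_le_iff₀ (by positivity)]
  calc _ ≤ Ab * P ^ n * r ^ (i + s) * (i + s)! * (Aa * P ^ n * r ^ i * i !) *
          (Ada * P ^ n * r ^ s * s !) * (D * r ^ (i + s)) * (|x| ^ i * |y| ^ s) := by
        gcongr
        exacts [hα n (i + s), hβ n i, hγβ n s, hD (i + s)]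
    _ = _ := by ring

/-- The general term of a triple series, indexed by `(n, (i, s))`. Summing over `(i, s)` gives the
generating series near `0`; collecting the monomials `Y ^ (n + s) * Z ^ (i + s)` gives a product of
two hypergeometric series. -/
def mixedTerm (a b d Y Z : ℝ) (p : ℕ × (ℕ × ℕ)) : ℝ :=
  hypCoeff (a + d) b (a + b + 1) p.1 * Y ^ p.1 *
    appellTerm (b + p.1) (-p.1 - a) d Z (Y * Z) p.2

lemma summable_mixedTerm (a b d : ℝ) {r Y Z : ℝ} (hr : 1 < r)
    (hY : (1 - r⁻¹)⁻¹ ^ 3 * r * |Y| < 1) (hZ : r ^ 3 * |Z| < 1) (hYZ : r ^ 3 * |Y * Z| < 1) :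
    Summable (mixedTerm a b d Y Z) := by
  have : 0 < r := one_pos.trans hr
  have h1 : 0 < 1 - r⁻¹ := sub_pos.2 (inv_lt_one_of_one_lt₀ hr)
  obtain ⟨C, hC⟩ := exists_abs_appellTerm_le a b d hr
  obtain ⟨H, hH, hcoeff⟩ := (isSubexponential_hypCoeff (a + d) b (a + b + 1)).exists_abs_le hr
  have geom {q : ℝ} (hq0 : 0 ≤ q) (hq : q < 1) := summable_geometric_of_lt_one hq0 hq
  have hgeom := (geom (by positivity) hY).mul_of_nonneg
    ((geom (by positivity) hZ).mul_of_nonneg (geom (by positivity) hYZ)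
      (fun _ ↦ by positivity) fun _ ↦ by positivity)
    (fun _ ↦ by positivity) fun _ ↦ by positivity
  refine .of_norm_bounded (hgeom.mul_left (H * C)) fun ⟨n, p⟩ ↦ ?_
  rw [Real.norm_eq_abs, mixedTerm, abs_mul, abs_mul, abs_pow]
  calc _ ≤ H * r ^ n * |Y| ^ n * (C * ((1 - r⁻¹)⁻¹ ^ 3) ^ n *
          ((r ^ 3 * |Z|) ^ p.1 * (r ^ 3 * |Y * Z|) ^ p.2)) := by
        gcongr
        exacts [hcoeff n, hC n Z (Y * Z) p]
    _ = _ := by ring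

lemma mixedTerm_eq_saalschutzTerm (a b d Y Z : ℝ) (n i s : ℕ) :
    mixedTerm a b d Y Z (n, (i, s)) =
      poch (a + d) (n + s) / ((n + s)! * (i + s)! * poch d (i + s)) * (Y ^ (n + s) * Z ^ (i + s)) *
        saalschutzTerm a b (n + s) (i + s) s := by
  have choose_mul (m : ℕ) : ((m + s).choose s : ℝ) * m ! * s ! = (m + s)! :=
    mod_cast Nat.add_choose_mul_factorial_mul_factorial m s
  have choose_ne (m : ℕ) : ((m + s).choose s : ℝ) ≠ 0 :=
    mod_cast (Nat.choose_pos (Nat.le_add_left s m)).ne'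
  have hindex : n + s + (i + s) - s = n + (i + s) := by omega
  have hshift : (s : ℝ) - ↑(n + s) - a = -n - a := by push_cast; ring
  have hcompl : d - (-n - a) = a + d + n := by ring
  have := choose_ne n
  have := choose_ne i
  simp only [mixedTerm, appellTerm, hypCoeff, saalschutzTerm, hindex, hshift, hcompl,
    Nat.add_sub_cancel, poch_add b, poch_add (a + d), ← choose_mul]
  field_simp
  ring

lemma sum_mixedTerm {a b : ℝ} (hc : ∀ m : ℕ, a + b + 1 ≠ -(m : ℝ)) (d Y Z : ℝ) (N K : ℕ) :
    ∑ s ∈ range (min N K + 1), mixedTerm a b d Y Z (N - s, (K - s, s)) =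
      hypCoeff (a + d) b (a + b + 1) N * Y ^ N * (hypCoeff (-a) b d K * Z ^ K) := by
  calc _ = poch (a + d) N / (N ! * K ! * poch d K) * (Y ^ N * Z ^ K) *
        ∑ s ∈ range (min N K + 1), saalschutzTerm a b N K s := by
        rw [mul_sum]
        refine sum_congr rfl fun s hs ↦ ?_
        have hs : s ≤ min N K := Nat.lt_succ_iff.1 (mem_range.1 hs)
        rw [mixedTerm_eq_saalschutzTerm, Nat.sub_add_cancel (hs.trans (min_le_left ..)),
          Nat.sub_add_cancel (hs.trans (min_le_right ..))]
    _ = poch (a + d) N / (N ! * K ! * poch d K) * (Y ^ N * Z ^ K) *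
        ∑ s ∈ range (K + 1), saalschutzTerm a b N K s := by
        congr 1
        refine sum_subset (range_mono (by omega)) fun s hsK hs ↦ saalschutzTerm_eq_zero ?_ ..
        rw [mem_range] at hsK hs
        omega
    _ = _ := by
        rw [sum_saalschutzTerm hc, hypCoeff, hypCoeff]
        ring

lemma hasSum_mixedTerm {a b d Y Z : ℝ} (hc : ∀ m : ℕ, a + b + 1 ≠ -(m : ℝ))
    (hY : |Y| < 1) (hZ : |Z| < 1) (hsum : Summable (mixedTerm a b d Y Z)) :
    HasSum (mixedTerm a b d Y Z) (hyp (a + d) b (a + b + 1) Y * hyp (-a) b d Z) := by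
  have hfib := hasSum_sum_fibers (g := fun p : ℕ × (ℕ × ℕ) ↦ (p.1 + p.2.2, p.2.1 + p.2.2))
    (t := fun q ↦ (range (min q.1 q.2 + 1)).image fun s ↦ (q.1 - s, (q.2 - s, s)))
    (fun ⟨n, i, s⟩ ⟨N, K⟩ ↦ by simp; omega) hsum.hasSum
  have hinj (N K M : ℕ) : Set.InjOn (fun s ↦ (N - s, (K - s, s))) (range M) :=
    fun s _ s' _ h ↦ congrArg (·.2.2) h
  simp only [sum_image (hinj _ _ _), sum_mixedTerm hc] at hfib
  have hprod := (hasSum_hyp (a + d) b (a + b + 1) hY).mul (hasSum_hyp (-a) b d hZ) hfib.summable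
  rw [hprod.unique hfib]
  exact hsum.hasSum

lemma hasSum_mixedTerm_right {d : ℝ} (hd : ∀ m : ℕ, d ≠ -(m : ℝ)) (a b : ℝ) {Y Z : ℝ}
    (h : |Z| + 2 * |Y * Z| < 1) (n : ℕ) :
    HasSum (fun q ↦ mixedTerm a b d Y Z (n, q))
      ((1 - Y * Z) ^ (-b) * (hypCoeff (a + d) b (a + b + 1) n *
        hyp (-n - a) (n + b) d ((Z - Y * Z) / (1 - Y * Z)) * (Y / (1 - Y * Z)) ^ n)) := by
  have h1 : 0 < 1 - Y * Z := by linarith [le_abs_self (Y * Z), abs_nonneg (Y * Z), abs_nonneg Z]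
  have hpow : (1 - Y * Z) ^ (-(b + n)) = (1 - Y * Z) ^ (-b) / (1 - Y * Z) ^ n := by
    rw [neg_add, Real.rpow_add h1, Real.rpow_neg h1.le n, Real.rpow_natCast, div_eq_mul_inv]
  have hvalue (F : ℝ) : (1 - Y * Z) ^ (-b) * (hypCoeff (a + d) b (a + b + 1) n * F *
      (Y / (1 - Y * Z)) ^ n) =
      hypCoeff (a + d) b (a + b + 1) n * Y ^ n * ((1 - Y * Z) ^ (-(b + n)) * F) := by
    rw [hpow, div_pow]
    ring
  rw [hvalue, hyp_comm, add_comm (n : ℝ)]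
  exact (hasSum_appellTerm hd (b + n) (-n - a) h).mul_left _

theorem eventually_tsum_eq_hyp_mul_hyp {a b d : ℝ} (hd : ∀ m : ℕ, d ≠ -(m : ℝ))
    (hc : ∀ m : ℕ, a + b + 1 ≠ -(m : ℝ)) {z : ℝ} (hz : |z| < 1) :
    ∀ᶠ p : ℝ × ℝ in 𝓝 (0, z), ∑' n : ℕ, hypCoeff (a + d) b (a + b + 1) n *
        hyp (-n - a) (n + b) d ((p.2 - p.1 * p.2) / (1 - p.1 * p.2)) *
          (p.1 / (1 - p.1 * p.2)) ^ n =
      (1 - p.1 * p.2) ^ b * (hyp (a + d) b (a + b + 1) p.1 * hyp (-a) b d p.2) := by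
  obtain ⟨r, hr, hrz⟩ : ∃ r : ℝ, 1 < r ∧ r ^ 3 * |z| < 1 := by
    have hlim : Tendsto (fun r : ℝ ↦ r ^ 3 * |z|) (𝓝[>] 1) (𝓝 (1 ^ 3 * |z|)) :=
      (Continuous.tendsto (by fun_prop) 1).mono_left nhdsWithin_le_nhds
    exact (eventually_mem_nhdsWithin.and (hlim.eventually_lt_const (by simpa using hz))).exists
  have near {f : ℝ × ℝ → ℝ} (hf : Continuous f) (h : f (0, z) < 1) : ∀ᶠ p in 𝓝 (0, z), f p < 1 :=
    hf.continuousAt.eventually_lt_const h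
  filter_upwards [near (f := fun p ↦ (1 - r⁻¹)⁻¹ ^ 3 * r * |p.1|) (by fun_prop) (by simp),
    near (f := fun p ↦ r ^ 3 * |p.2|) (by fun_prop) hrz,
    near (f := fun p ↦ r ^ 3 * |p.1 * p.2|) (by fun_prop) (by simp),
    near (f := fun p ↦ |p.1|) (by fun_prop) (by simp),
    near (f := fun p ↦ |p.2| + 2 * |p.1 * p.2|) (by fun_prop) (by simpa using hz)]
    with ⟨Y, Z⟩ hrY hrZ hrYZ hY hZ
  dsimp only at *
  have h1 : 0 < 1 - Y * Z := by linarith [le_abs_self (Y * Z), abs_nonneg (Y * Z), abs_nonneg Z]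
  have hprod := hasSum_mixedTerm hc hY (by linarith [abs_nonneg (Y * Z)])
    (summable_mixedTerm a b d hr hrY hrZ hrYZ)
  have hseries := (hprod.prod_fiberwise (hasSum_mixedTerm_right hd a b hZ)).mul_left
    ((1 - Y * Z) ^ b)
  simpa [← mul_assoc, ← Real.rpow_add h1] using hseries.tsum_eq

section Parametrization

/-- The square root occurring in the arguments of the two hypergeometric factors; with `u = -t` it
is `√((1 + t) ^ 2 - 4 * x * t)`. -/
def genRoot (x u : ℝ) : ℝ := √((1 - u) ^ 2 + 4 * x * u)

/-- The argument `Z` of the factor `F(-a,b;d;Z)`. Together with `Y = rightArg x u` it solves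
`x = (Z - Y * Z) / (1 - Y * Z)` and `u = Y / (1 - Y * Z)`. -/
def leftArg (x u : ℝ) : ℝ := 2 * x / (1 + genRoot x u - u)

/-- The argument `Y` of the factor `F(a+d,b;a+b+1;Y)`; see `leftArg`. -/
def rightArg (x u : ℝ) : ℝ := 2 * u / (1 + genRoot x u + u)

lemma leftArg_zero (x : ℝ) : leftArg x 0 = x := by
  norm_num [leftArg, genRoot]

lemma rightArg_zero (x : ℝ) : rightArg x 0 = 0 := by simp [rightArg]

variable {x u : ℝ}

lemma radicand_pos (hx0 : 0 < x) (hx1 : x < 1) (hu : |u| < 1) : 0 < (1 - u) ^ 2 + 4 * x * u := by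
  obtain ⟨hu1, hu2⟩ := abs_lt.1 hu
  have h1 : 0 < (1 - x) * (1 - u) ^ 2 := mul_pos (by linarith) (pow_pos (by linarith) 2)
  have h2 : 0 < x * (1 + u) ^ 2 := mul_pos hx0 (pow_pos (by linarith) 2)
  linarith

lemma sq_genRoot (hx0 : 0 < x) (hx1 : x < 1) (hu : |u| < 1) :
    genRoot x u ^ 2 = (1 - u) ^ 2 + 4 * x * u :=
  Real.sq_sqrt (radicand_pos hx0 hx1 hu).le

lemma one_add_genRoot_sub_pos (x : ℝ) (hu : |u| < 1) : 0 < 1 + genRoot x u - u := by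
  have h : 0 ≤ genRoot x u := Real.sqrt_nonneg _
  linarith [(abs_lt.1 hu).2]

lemma one_add_genRoot_add_pos (x : ℝ) (hu : |u| < 1) : 0 < 1 + genRoot x u + u := by
  have h : 0 ≤ genRoot x u := Real.sqrt_nonneg _
  linarith [(abs_lt.1 hu).1]

lemma leftArg_pos (hx0 : 0 < x) (hu : |u| < 1) : 0 < leftArg x u :=
  div_pos (by positivity) (one_add_genRoot_sub_pos x hu)

lemma leftArg_lt_one (hx0 : 0 < x) (hx1 : x < 1) (hu : |u| < 1) : leftArg x u < 1 := by
  rw [leftArg, div_lt_one (one_add_genRoot_sub_pos x hu)]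
  have : 2 * x - 1 + u < genRoot x u := Real.lt_sqrt_of_sq_lt (by
    nlinarith [mul_pos hx0 (sub_pos.2 hx1)])
  linarith

lemma rightArg_lt_one (hx0 : 0 < x) (hx1 : x < 1) (hu : |u| < 1) : rightArg x u < 1 := by
  rw [rightArg, div_lt_one (one_add_genRoot_add_pos x hu)]
  have : 0 < genRoot x u := Real.sqrt_pos.2 (radicand_pos hx0 hx1 hu)
  linarith [(abs_lt.1 hu).2]

lemma one_sub_rightArg_mul_leftArg (hx0 : 0 < x) (hx1 : x < 1) (hu : |u| < 1) :
    1 - rightArg x u * leftArg x u = 2 / (1 + genRoot x u + u) := by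
  have := (one_add_genRoot_sub_pos x hu).ne'
  have := (one_add_genRoot_add_pos x hu).ne'
  rw [rightArg, leftArg]
  field_simp
  linear_combination sq_genRoot hx0 hx1 hu

lemma rightArg_div (hx0 : 0 < x) (hx1 : x < 1) (hu : |u| < 1) :
    rightArg x u / (1 - rightArg x u * leftArg x u) = u := by
  have := (one_add_genRoot_add_pos x hu).ne'
  rw [one_sub_rightArg_mul_leftArg hx0 hx1 hu, rightArg]
  field_simp

lemma leftArg_sub_div (hx0 : 0 < x) (hx1 : x < 1) (hu : |u| < 1) :
    (leftArg x u - rightArg x u * leftArg x u) / (1 - rightArg x u * leftArg x u) = x := by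
  have := (one_add_genRoot_sub_pos x hu).ne'
  have := (one_add_genRoot_add_pos x hu).ne'
  rw [one_sub_rightArg_mul_leftArg hx0 hx1 hu, rightArg, leftArg]
  field_simp
  ring

lemma leftArg_eq (hx0 : 0 < x) (hx1 : x < 1) (hu : |u| < 1) (hu0 : u ≠ 0) :
    leftArg x u = (u - (1 - genRoot x u)) / (2 * u) := by
  have := (one_add_genRoot_sub_pos x hu).ne'
  rw [leftArg]
  field_simp
  linear_combination -sq_genRoot hx0 hx1 hu

lemma one_sub_rightArg (hu : |u| < 1) :
    1 - rightArg x u = (1 + genRoot x u - u) / (1 + genRoot x u + u) := by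
  have := (one_add_genRoot_add_pos x hu).ne'
  rw [rightArg]
  field_simp
  ring

lemma rightArg_div_sub_one (hu : |u| < 1) :
    rightArg x u / (rightArg x u - 1) = -(2 * u) / (1 + genRoot x u - u) := by
  have := (one_add_genRoot_add_pos x hu).ne'
  rw [← neg_sub 1 (rightArg x u), one_sub_rightArg hu, rightArg]
  field_simp

lemma hypExt_rightArg (hx0 : 0 < x) (hx1 : x < 1) (hu : |u| < 1) (a b c : ℝ) :
    hypExt a b c (rightArg x u) =
      ((1 + genRoot x u + u) / (1 + genRoot x u - u)) ^ a *
        hypExt a (c - b) c (-(2 * u) / (1 + genRoot x u - u)) := by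
  have hpos := div_pos (one_add_genRoot_sub_pos x hu) (one_add_genRoot_add_pos x hu)
  rw [hypExt_pfaff (rightArg_lt_one hx0 hx1 hu), rightArg_div_sub_one hu, one_sub_rightArg hu,
    Real.rpow_neg hpos.le, ← Real.inv_rpow hpos.le, inv_div]

lemma analyticAt_genRoot (hx0 : 0 < x) (hx1 : x < 1) (hu : |u| < 1) :
    AnalyticAt ℝ (genRoot x) u := by
  have h := analyticAt_rpow_const (f := fun u ↦ (1 - u) ^ 2 + 4 * x * u) (by fun_prop)
    (radicand_pos hx0 hx1 hu) (1 / 2)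
  simp only [← Real.sqrt_eq_rpow] at h
  exact h

lemma analyticAt_leftArg (hx0 : 0 < x) (hx1 : x < 1) (hu : |u| < 1) :
    AnalyticAt ℝ (leftArg x) u :=
  analyticAt_const.div ((analyticAt_const.add (analyticAt_genRoot hx0 hx1 hu)).sub analyticAt_id)
    (one_add_genRoot_sub_pos x hu).ne'

lemma analyticAt_rightArg (hx0 : 0 < x) (hx1 : x < 1) (hu : |u| < 1) :
    AnalyticAt ℝ (rightArg x) u :=
  (analyticAt_const.mul analyticAt_id).div
    ((analyticAt_const.add (analyticAt_genRoot hx0 hx1 hu)).add analyticAt_id)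
    (one_add_genRoot_add_pos x hu).ne'

end Parametrization

section GeneratingFunction

/-- The closed form of the generating series of `(a+d)_n (b)_n / ((a+b+1)_n n!) F(-n-a,n+b;d;x)`. -/
def genClosedForm (a b d x u : ℝ) : ℝ :=
  (1 - rightArg x u * leftArg x u) ^ b *
    (hypExt (a + d) b (a + b + 1) (rightArg x u) * hyp (-a) b d (leftArg x u))

variable {a b d x : ℝ}

lemma analyticOnNhd_genClosedForm (hc : ∀ m : ℕ, a + b + 1 ≠ -(m : ℝ)) (d : ℝ)
    (hx0 : 0 < x) (hx1 : x < 1) : AnalyticOnNhd ℝ (genClosedForm a b d x) (Set.Ioo (-1) 1) := by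
  intro u hu
  replace hu := abs_lt.2 hu
  have hleft := analyticAt_leftArg hx0 hx1 hu
  have hright := analyticAt_rightArg hx0 hx1 hu
  have hpos : 0 < 1 - rightArg x u * leftArg x u := by
    rw [one_sub_rightArg_mul_leftArg hx0 hx1 hu]
    exact div_pos two_pos (one_add_genRoot_add_pos x hu)
  have hleft_mem : leftArg x u ∈ Set.Ioo (-1) 1 :=
    ⟨by linarith [leftArg_pos hx0 hu], leftArg_lt_one hx0 hx1 hu⟩
  exact (analyticAt_rpow_const (analyticAt_const.sub (hright.mul hleft)) hpos b).mul
    (((analyticAt_hypExt hc _ _ (rightArg_lt_one hx0 hx1 hu)).comp hright).mul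
      ((analyticOnNhd_hyp _ _ _ _ hleft_mem).comp hleft))

lemma eventually_tsum_eq_genClosedForm (hd : ∀ m : ℕ, d ≠ -(m : ℝ))
    (hc : ∀ m : ℕ, a + b + 1 ≠ -(m : ℝ)) (hx0 : 0 < x) (hx1 : x < 1) :
    (fun u ↦ ∑' n : ℕ, hypCoeff (a + d) b (a + b + 1) n * hyp (-n - a) (n + b) d x * u ^ n)
      =ᶠ[𝓝 0] genClosedForm a b d x := by
  have hright := (analyticAt_rightArg hx0 hx1 (u := 0) (by simp)).continuousAt.tendsto
  have hleft := (analyticAt_leftArg hx0 hx1 (u := 0) (by simp)).continuousAt.tendsto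
  rw [rightArg_zero] at hright
  rw [leftArg_zero] at hleft
  filter_upwards [(hright.prodMk_nhds hleft).eventually
      (eventually_tsum_eq_hyp_mul_hyp hd hc (abs_lt.2 ⟨by linarith, hx1⟩)),
    hright.eventually (hypExt_eventuallyEq_hyp hc (a + d) b),
    Metric.ball_mem_nhds (0 : ℝ) one_pos] with u hlocal hext hball
  have hu : |u| < 1 := by simpa using hball
  simp only [leftArg_sub_div hx0 hx1 hu, rightArg_div hx0 hx1 hu] at hlocal
  rw [hlocal, genClosedForm, hext]

theorem tsum_eq_genClosedForm (hd : ∀ m : ℕ, d ≠ -(m : ℝ)) (hc : ∀ m : ℕ, a + b + 1 ≠ -(m : ℝ))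
    (hx0 : 0 < x) (hx1 : x < 1) {u : ℝ} (hu : |u| < 1) :
    ∑' n : ℕ, hypCoeff (a + d) b (a + b + 1) n * hyp (-n - a) (n + b) d x * u ^ n =
      genClosedForm a b d x u :=
  have hseries := (isSubexponential_hypCoeff (a + d) b (a + b + 1)).mul
    (isSubexponential_hyp_neg_natCast_sub hd hx0 hx1 a b)
  hseries.analyticOnNhd.eqOn_of_preconnected_of_eventuallyEq
    (analyticOnNhd_genClosedForm hc d hx0 hx1) isPreconnected_Ioo (z₀ := 0) (by norm_num)
    (eventually_tsum_eq_genClosedForm hd hc hx0 hx1) (abs_lt.1 hu)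

end GeneratingFunction

theorem flensted_jensen_koornwinder (a b d x t : ℝ)
    (hd : ∀ m : ℕ, d ≠ -(m : ℝ)) (hab : ∀ m : ℕ, a + b + 1 ≠ -(m : ℝ))
    (hx0 : 0 < x) (hx1 : x < 1) (ht0 : 0 < |t|) (ht1 : |t| < 1) :
    (∑' n : ℕ, poch (d + a) n * poch b n / poch (a + b + 1) n
        * hyp (-(n:ℝ) - a) ((n:ℝ) + b) d x * (-t)^n / (Nat.factorial n : ℝ))
    = ((1 + Real.sqrt ((1 + t)^2 - 4*x*t) - t) / (1 + Real.sqrt ((1 + t)^2 - 4*x*t) + t))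
          ^ (a + d)
      * (2 / (1 + Real.sqrt ((1 + t)^2 - 4*x*t) - t)) ^ b
      * hypExt (-a) b d ((t + (1 - Real.sqrt ((1 + t)^2 - 4*x*t))) / (2*t))
      * hypExt (a + d) (a + 1) (a + b + 1)
          (2*t / (t + (1 + Real.sqrt ((1 + t)^2 - 4*x*t)))) := by
  have hu : |-t| < 1 := by rwa [abs_neg]
  have hroot : √((1 + t) ^ 2 - 4 * x * t) = genRoot x (-t) := congrArg Real.sqrt (by ring)
  have hleft : (t + (1 - genRoot x (-t))) / (2 * t) = leftArg x (-t) := by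
    rw [leftArg_eq hx0 hx1 hu (neg_ne_zero.2 (abs_pos.1 ht0)), ← neg_add', mul_neg,
      neg_div_neg_eq]
  calc _ = ∑' n : ℕ, hypCoeff (a + d) b (a + b + 1) n * hyp (-n - a) (n + b) d x * (-t) ^ n :=
        tsum_congr fun n ↦ by rw [hypCoeff, add_comm d]; ring
    _ = genClosedForm a b d x (-t) := tsum_eq_genClosedForm hd hab hx0 hx1 hu
    _ = _ := by
        rw [genClosedForm, one_sub_rightArg_mul_leftArg hx0 hx1 hu, hypExt_rightArg hx0 hx1 hu,
          hroot, hleft, hypExt_of_nonneg (leftArg_pos hx0 hu).le]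
        ring_nf
end
end
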